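/- Let F_n(λ) = ∏_{i=1}^{m}(λ − λ_i) and G_n(λ) = ∏_{i=1}^{m−1}(λ − λ_i − ρ_i), and let μ_n, ν_n be real numbers with −μ_n/ν_n > C·(Λ/λ_1)^n·Λ·M/(Λ − λ_1). Then there exist monic real polynomials F_1,…,F_{n−1}, G_1,…,G_{n−1} and real numbers λ*_2,…,λ*_n, b_2,…,b_n, m_2,…,m_n, μ_1,…,μ_{n−1}, ν_1,…,ν_{n−1} such that for every j = 1,…,n−1: (i) λ*_{j+1} > 0, b_{j+1} > 0, m_{j+1} > 0, and −μ_j/ν_j > C·(Λ/λ_1)^j·Λ·M/(Λ − λ_1); (ii) if j ∉ I, then μ_{j+1}·F_{j+1}(λ) = −m_{j+1}·ν_{j+1}·λ·G_{j+1}(λ) + b_{j+1}·μ_j·(λ*_{j+1} − λ)·F_j(λ) and ν_{j+1}·G_{j+1}(λ) = μ_j·F_j(λ) + b_{j+1}·ν_j·(λ*_{j+1} − λ)·G_j(λ), while if l+1+Σ_{h=1}^{l}q_h ≤ j ≤ l+Σ_{h=1}^{l+1}q_h for some l ∈ {0,…,T−2}, then μ_{j+1}·F_{j+1}(λ) = −m_{j+1}·ν_{j+1}·λ·G_{j+1}(λ)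 − b_{j+1}·μ_j·F_j(λ), ν_{j+1}·(λ − λ*_{j+1})·G_{j+1}(λ) = μ_j·F_j(λ) + b_{j+1}·ν_j·(λ*_{j+1} − λ)·G_j(λ), and λ*_{j+1} = s_{l+1}(l+1+Σ_{h=1}^{l+1}q_h − j). -/

import Mathlib

open Polynomial

/-- `Δ = (1/2)·min{1, min_{1≤i≤m−1}(λ_{i+1} − λ_i)}`. -/
noncomputable def Del (m : ℕ) (lam : ℕ → ℝ) : ℝ :=
  (1 / 2) * min 1 (sInf ((fun i => lam (i + 1) - lam i) '' Set.Icc 1 (m - 1)))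

/-- `Λ = 1 + λ_m`. -/
noncomputable def Lamb (m : ℕ) (lam : ℕ → ℝ) : ℝ := 1 + lam m

/-- `ε = Δ^{n²+n+1}/(n·2^{3(n+1)³}·Λ^{(n+1)²})`. -/
noncomputable def eps (n m : ℕ) (lam : ℕ → ℝ) : ℝ :=
  Del m lam ^ (n ^ 2 + n + 1) /
    ((n : ℝ) * 2 ^ (3 * (n + 1) ^ 3) * Lamb m lam ^ ((n + 1) ^ 2))

/-- `ρ_i = ε^{(n+1)^{m−i}}`. -/
noncomputable def rho (n m : ℕ) (lam : ℕ → ℝ) (i : ℕ) : ℝ :=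
  eps n m lam ^ ((n + 1) ^ (m - i))

/-- `C_1 = Δ/(2^{n+1}Λ)`. -/
noncomputable def Cone (n m : ℕ) (lam : ℕ → ℝ) : ℝ :=
  Del m lam / (2 ^ (n + 1) * Lamb m lam)

/-- `C_2(j) = 2^{2(n+1)²}·Λ^{n+1}/(Δ^n·ε^{(n+1)^{m−j−1}})`. -/
noncomputable def Ctwo (n m : ℕ) (lam : ℕ → ℝ) (j : ℕ) : ℝ :=
  2 ^ (2 * (n + 1) ^ 2) * Lamb m lam ^ (n + 1) /
    (Del m lam ^ n * eps n m lam ^ ((n + 1) ^ (m - j - 1)))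

/-- `C = 2^{2n+1}(1 + Λ^n)/(C_1^{2n²}·ρ_1^{2n})`. -/
noncomputable def CC (n m : ℕ) (lam : ℕ → ℝ) : ℝ :=
  2 ^ (2 * n + 1) * (1 + Lamb m lam ^ n) /
    (Cone n m lam ^ (2 * n ^ 2) * rho n m lam 1 ^ (2 * n))

/-!
A pair `F`, `G` of degrees `e + 1`, `e` with interlacing roots is taken back one stage by two
Euclid-like divisions: `F - θ X G` is a multiple of `(X - ℓ) P`, and `G - κ P` is a multiple of the
next `G`. At a stage of `I` the prescribed `ℓ = λ*` is kept as a root of the new `F`; otherwise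
`ℓ = Λ`, and `κ` is chosen so that `Λ` is also a root of `G - κ P`, which lowers both degrees. The
other roots are found by the intermediate value theorem: a root of `P` between each root of `F` and
the next root of `G`, and a root of the next `G` slightly to the right of each root of `G`, so that
they all stay in windows `[λ_i, λ_i + D ρ_i]`. In a step that keeps the degrees `D` grows by a
bounded factor; in one that lowers them to `e + 1`, `e` it also grows by a factor of order
`1 / ρ_{e+1}`, which is harmless because only the much smaller `ρ_1, …, ρ_e` are still needed. The
ratio `-μ / ν` loses at most the factor `λ_1 / Λ` per step.
-/

section NodalPolynomials

theorem eq_C_coeff_mul_nodal {K ι : Type*} [Field K] {s : Finset ι} {v : ι → K} {P : K[X]}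
    (hv : Set.InjOn v s) (hP : P.natDegree ≤ s.card) (h0 : ∀ i ∈ s, P.eval (v i) = 0) :
    P = C (P.coeff s.card) * Lagrange.nodal s v := by
  have hnodal : (Lagrange.nodal s v).coeff s.card = 1 := by
    simpa only [Lagrange.natDegree_nodal] using
      (Lagrange.nodal_monic (s := s) (v := v)).coeff_natDegree
  refine eq_of_degree_sub_lt_of_eval_index_eq s hv ?_ fun i hi => ?_
  · rw [degree_lt_iff_coeff_zero]
    intro k hk
    rcases hk.eq_or_lt with rfl | hk
    · simp only [coeff_sub, coeff_C_mul, hnodal, mul_one, sub_self]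
    · have hk' : (Lagrange.nodal s v).natDegree < k := by rwa [Lagrange.natDegree_nodal]
      rw [coeff_sub, coeff_C_mul, coeff_eq_zero_of_natDegree_lt (hP.trans_lt hk),
        coeff_eq_zero_of_natDegree_lt hk', mul_zero, sub_zero]
  · rw [h0 i hi, eval_mul, Lagrange.eval_nodal_at_node hi, mul_zero]

theorem sub_C_mul_eq_C_mul_nodal {K ι : Type*} [Field K] {s : Finset ι} {v : ι → K} {P Q : K[X]}
    {θ : K} (hv : Set.InjOn v s) (hP : P.Monic) (hPs : P.natDegree = s.card) (hQ : Q.Monic)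
    (hQs : Q.natDegree = s.card) (h : ∀ i ∈ s, P.eval (v i) = θ * Q.eval (v i)) :
    P - C θ * Q = C (1 - θ) * Lagrange.nodal s v := by
  have hdeg : (P - C θ * Q).natDegree ≤ s.card :=
    (natDegree_sub_le_of_le hPs.le ((natDegree_C_mul_le θ Q).trans hQs.le)).trans_eq (max_self _)
  have hlead : (P - C θ * Q).coeff s.card = 1 - θ := by
    rw [coeff_sub, coeff_C_mul, ← hPs, hP.coeff_natDegree, hPs, ← hQs, hQ.coeff_natDegree, mul_one]
  rw [eq_C_coeff_mul_nodal hv hdeg fun i hi => ?_, hlead]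
  rw [eval_sub, eval_mul, eval_C, h i hi, sub_self]

theorem nodal_snoc {R : Type*} [CommRing R] {e : ℕ} (a : Fin e → R) (x : R) :
    Lagrange.nodal Finset.univ (Fin.snoc a x : Fin (e + 1) → R) =
      (X - C x) * Lagrange.nodal Finset.univ a := by
  simp only [Lagrange.nodal, Fin.prod_univ_castSucc, Fin.snoc_castSucc, Fin.snoc_last, mul_comm]

end NodalPolynomials

section RealFunctions

open Set

theorem exists_mem_Ioo_eq_mul_of_lt_div {f g : ℝ → ℝ} {x y κ : ℝ} (hxy : x < y)
    (hf : ContinuousOn f (Icc x y)) (hg : ContinuousOn g (Icc x y))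
    (hg0 : ∀ t ∈ Icc x y, g t ≠ 0) (hfx : f x = 0) (hκ : 0 < κ) (hy : κ < f y / g y) :
    ∃ r ∈ Ioo x y, f r = κ * g r := by
  have hmem : κ ∈ Ioo (f x / g x) (f y / g y) := ⟨by rwa [hfx, zero_div], hy⟩
  obtain ⟨r, hr, h⟩ := intermediate_value_Ioo hxy.le (hf.div hg hg0) hmem
  exact ⟨r, hr, (div_eq_iff (hg0 r (Ioo_subset_Icc_self hr))).mp h⟩

/-- Only the factors with `a k < x` can be less than `1`. -/
theorem one_sub_card_mul_le_prod_div {ι : Type*} {s : Finset ι} {a b : ι → ℝ} {x u : ℝ}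
    (hu0 : 0 ≤ u) (hu : u ≤ 1)
    (h : ∀ k ∈ s, a k < x ∧ b k - a k ≤ u * (x - a k) ∨ x < a k ∧ a k ≤ b k) :
    1 - s.card * u ≤ ∏ k ∈ s, (x - b k) / (x - a k) := by
  have hfactor : ∀ k ∈ s, 1 - u ≤ (x - b k) / (x - a k) := by
    intro k hk
    rcases h k hk with ⟨hlt, hle⟩ | ⟨hlt, hle⟩
    · rw [le_div_iff₀ (sub_pos.mpr hlt)]
      linarith
    · rw [le_div_iff_of_neg (sub_neg.mpr hlt)]
      nlinarith
  calc 1 - s.card * u = 1 + s.card * -u := by ring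
    _ ≤ (1 + -u) ^ s.card := one_add_mul_le_pow (by linarith) _
    _ = ∏ _ ∈ s, (1 - u) := by rw [Finset.prod_const, sub_eq_add_neg]
    _ ≤ _ := Finset.prod_le_prod (fun _ _ => sub_nonneg.mpr hu) hfactor

end RealFunctions

section Interlacing

open Lagrange (nodal)

/-- The strict interlacing `a 0 < b 0 < a 1 < b 1 < ⋯ < b (e - 1) < a e` of the roots of the two
monic polynomials of a stage. -/
structure Interlacing {e : ℕ} (a : Fin (e + 1) → ℝ) (b : Fin e → ℝ) : Prop where
  lt_right : ∀ i, a i.castSucc < b i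
  right_lt : ∀ i, b i < a i.succ

namespace Interlacing

variable {e : ℕ} {a : Fin (e + 1) → ℝ} {b : Fin e → ℝ}

theorem strictMono_left (h : Interlacing a b) : StrictMono a :=
  Fin.strictMono_iff_lt_succ.mpr fun i => (h.lt_right i).trans (h.right_lt i)

theorem right_lt_of_lt (h : Interlacing a b) {i : Fin e} {k : Fin (e + 1)} (hik : i.castSucc < k) :
    b i < a k :=
  (h.right_lt i).trans_le (h.strictMono_left.monotone (Fin.castSucc_lt_iff_succ_le.mp hik))

theorem strictMono_right (h : Interlacing a b) : StrictMono b := fun _ j hij =>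
  (h.right_lt_of_lt (Fin.castSucc_lt_castSucc_iff.mpr hij)).trans (h.lt_right j)

theorem eval_div_mul_eval_mem (h : Interlacing a b) {ℓ : ℝ} (ha : 0 < a 0)
    (hℓ : a (Fin.last e) < ℓ) :
    (nodal Finset.univ a).eval ℓ / (ℓ * (nodal Finset.univ b).eval ℓ) ∈
      Set.Ioc 0 (1 - a 0 / ℓ) := by
  have hlt : ∀ k, a k < ℓ := fun k => (h.strictMono_left.monotone (Fin.le_last k)).trans_lt hℓ
  have hℓ0 : 0 < ℓ := ha.trans (hlt 0)
  have hnum : ∀ i, 0 < ℓ - a (Fin.succ i) := fun i => sub_pos.mpr (hlt _)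
  have hden : ∀ i, 0 < ℓ - b i := fun i => by linarith [h.right_lt i, hnum i]
  have hsplit : (nodal Finset.univ a).eval ℓ / (ℓ * (nodal Finset.univ b).eval ℓ) =
      (1 - a 0 / ℓ) * ∏ i, (ℓ - a (Fin.succ i)) / (ℓ - b i) := by
    rw [Lagrange.eval_nodal, Lagrange.eval_nodal, Fin.prod_univ_succ, Finset.prod_div_distrib,
      one_sub_div hℓ0.ne', div_mul_div_comm]
  have hhead : 0 < 1 - a 0 / ℓ := sub_pos.mpr ((div_lt_one hℓ0).mpr (hlt 0))
  rw [hsplit]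
  refine ⟨mul_pos hhead (Finset.prod_pos fun i _ => div_pos (hnum i) (hden i)),
    mul_le_of_le_one_right hhead.le
      (Finset.prod_le_one (fun i _ => (div_pos (hnum i) (hden i)).le) fun i _ => ?_)⟩
  rw [div_le_one (hden i)]
  linarith [h.right_lt i]

theorem one_le_eval_div_mul_eval (h : Interlacing a b) {i : Fin e} {y : ℝ} (hy0 : 0 < y)
    (hay : a i.castSucc < y) (hyb : y < b i)
    (hy : y * (b i - y) ≤ (y - a i.castSucc) * (a i.succ - y)) :
    1 ≤ (nodal Finset.univ a).eval y / (y * (nodal Finset.univ b).eval y) := by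
  let φ : Fin e → ℝ := fun k => (y - a (i.castSucc.succAbove k)) / (y - b k)
  have hsplit : (nodal Finset.univ a).eval y / (y * (nodal Finset.univ b).eval y) =
      (y - a i.castSucc) / y * (φ i * ∏ k ∈ Finset.univ.erase i, φ k) := by
    rw [Finset.mul_prod_erase _ _ (Finset.mem_univ i), Lagrange.eval_nodal, Lagrange.eval_nodal,
      Fin.prod_univ_succAbove _ i.castSucc, Finset.prod_div_distrib, div_mul_div_comm]
  have hi : φ i = (a i.succ - y) / (b i - y) := by
    simp only [φ, Fin.succAbove_castSucc_self]
    rw [← neg_sub, ← neg_sub (b i), neg_div_neg_eq]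
  have hother : ∀ k ∈ Finset.univ.erase i, 1 ≤ φ k := by
    intro k hk
    rcases lt_or_gt_of_ne (Finset.ne_of_mem_erase hk) with hki | hik
    · have hby : b k < y :=
        (h.right_lt_of_lt (Fin.castSucc_lt_castSucc_iff.mpr hki)).trans hay
      simp only [φ, Fin.succAbove_castSucc_of_lt _ _ hki]
      rw [one_le_div (sub_pos.mpr hby)]
      linarith [h.lt_right k]
    · have hyb' : y < b k := hyb.trans (h.strictMono_right hik)
      simp only [φ, Fin.succAbove_castSucc_of_le _ _ hik.le]
      rw [one_le_div_of_neg (sub_neg.mpr hyb')]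
      linarith [h.right_lt k]
  have hmain : 1 ≤ (y - a i.castSucc) / y * φ i := by
    rw [hi, div_mul_div_comm, one_le_div (mul_pos hy0 (sub_pos.mpr hyb))]
    exact hy
  rw [hsplit, ← mul_assoc]
  exact one_le_mul_of_one_le_of_one_le hmain (Finset.one_le_prod hother)

theorem exists_mem_Ioo_eval_eq (h : Interlacing a b) {θ δ L : ℝ} (ha : 0 < a 0) (hθ0 : 0 < θ)
    (hθ1 : θ < 1) (hδ : 0 < δ) (hL : a (Fin.last e) ≤ L) (i : Fin e)
    (hgap : b i + δ ≤ a i.succ) :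
    ∃ x ∈ Set.Ioo (a i.castSucc) (b i - δ / (2 * L) * (b i - a i.castSucc)),
      (nodal Finset.univ a).eval x = θ * (x * (nodal Finset.univ b).eval x) := by
  have hai : 0 < a i.castSucc := ha.trans_le (h.strictMono_left.monotone (Fin.zero_le _))
  have hasL : a i.succ ≤ L := (h.strictMono_left.monotone (Fin.le_last _)).trans hL
  have hab := h.lt_right i
  have hL0 : 0 < L := by linarith
  set c := δ / (2 * L) with hc
  have hcL : c * L = δ / 2 := by rw [hc]; field_simp
  have hc0 : 0 < c := by positivity
  have hc1 : c < 1 / 2 := by rw [hc, div_lt_iff₀ (by positivity)]; linarith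
  set g := b i - a i.castSucc
  have hg0 : 0 < g := sub_pos.mpr hab
  have hcg : c * g < g / 2 := by nlinarith
  have hay : a i.castSucc < b i - c * g := by linarith
  have hyb : b i - c * g < b i := sub_lt_self _ (mul_pos hc0 hg0)
  have hbalance : (b i - c * g) * (b i - (b i - c * g)) ≤
      (b i - c * g - a i.castSucc) * (a i.succ - (b i - c * g)) :=
    calc (b i - c * g) * (b i - (b i - c * g)) = (b i - c * g) * (c * g) := by ring
      _ ≤ L * (c * g) := by gcongr; linarith
      _ = g / 2 * δ := by rw [← mul_assoc, mul_comm L, hcL]; ring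
      _ ≤ (b i - c * g - a i.castSucc) * (a i.succ - (b i - c * g)) := by
        gcongr <;> linarith
  have hden : ∀ t ∈ Set.Icc (a i.castSucc) (b i - c * g),
      t * (nodal Finset.univ b).eval t ≠ 0 := by
    rintro t ⟨hat, hty⟩
    refine mul_ne_zero (hai.trans_le hat).ne' (Lagrange.eval_nodal_not_at_node fun k _ => ?_)
    rcases lt_or_ge k i with hki | hik
    · exact ((h.right_lt_of_lt (Fin.castSucc_lt_castSucc_iff.mpr hki)).trans_le hat).ne'
    · exact ((hty.trans_lt hyb).trans_le (h.strictMono_right.monotone hik)).ne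
  exact exists_mem_Ioo_eq_mul_of_lt_div hay (nodal _ a).continuousOn
    (continuousOn_id.mul (nodal _ b).continuousOn) hden
    (Lagrange.eval_nodal_at_node (Finset.mem_univ _)) hθ0
    (hθ1.trans_le (h.one_le_eval_div_mul_eval (hai.trans hay) hay hyb hbalance))

/-- The multiplier `θ` is chosen so that `ℓ` becomes a root; the other `e` roots are then trapped
by the interlacing. -/
theorem exists_sub_mul_X_mul_eq (h : Interlacing a b) {δ ℓ L : ℝ} (ha : 0 < a 0) (hδ : 0 < δ)
    (hgap : ∀ i, b i + δ ≤ a i.succ) (hℓ : a (Fin.last e) < ℓ) (hL : a (Fin.last e) ≤ L) :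
    ∃ (θ : ℝ) (a' : Fin e → ℝ), 0 < θ ∧ θ ≤ 1 - a 0 / ℓ ∧
      (∀ i, a' i ∈ Set.Ioo (a i.castSucc) (b i - δ / (2 * L) * (b i - a i.castSucc))) ∧
      nodal Finset.univ a - C θ * X * nodal Finset.univ b =
        C (1 - θ) * ((X - C ℓ) * nodal Finset.univ a') := by
  have hlt : ∀ k, a k < ℓ := fun k => (h.strictMono_left.monotone (Fin.le_last k)).trans_lt hℓ
  have hℓ0 : 0 < ℓ := ha.trans (hlt 0)
  set θ := (nodal Finset.univ a).eval ℓ / (ℓ * (nodal Finset.univ b).eval ℓ) with hθ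
  obtain ⟨hθ0, hθη⟩ : 0 < θ ∧ θ ≤ 1 - a 0 / ℓ := h.eval_div_mul_eval_mem ha hℓ
  have hθ1 : θ < 1 := hθη.trans_lt (sub_lt_self _ (div_pos ha hℓ0))
  choose a' ha' hroot using fun i => h.exists_mem_Ioo_eval_eq ha hθ0 hθ1 hδ hL i (hgap i)
  refine ⟨θ, a', hθ0, hθη, ha', ?_⟩
  have hLpos : 0 < L := (ha.trans_le (h.strictMono_left.monotone (Fin.le_last 0))).trans_le hL
  have ha'b : ∀ i, a' i < b i := fun i =>
    (ha' i).2.trans (sub_lt_self _ (mul_pos (by positivity) (sub_pos.mpr (h.lt_right i))))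
  have hmono : StrictMono a' := fun i j hij => (ha'b i).trans
    ((h.right_lt_of_lt (Fin.castSucc_lt_castSucc_iff.mpr hij)).trans (ha' j).1)
  have hinj : Function.Injective (Fin.snoc a' ℓ : Fin (e + 1) → ℝ) :=
    Fin.snoc_injective_iff.mpr ⟨hmono.injective, fun ⟨i, hi⟩ =>
      ((ha'b i).trans ((h.right_lt i).trans (hlt _))).ne hi⟩
  rw [mul_assoc, ← nodal_snoc]
  refine sub_C_mul_eq_C_mul_nodal hinj.injOn Lagrange.nodal_monic Lagrange.natDegree_nodal
    (monic_X.mul Lagrange.nodal_monic) ?_ fun k _ => ?_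
  · rw [natDegree_X_mul Lagrange.nodal_monic.ne_zero, Lagrange.natDegree_nodal,
      Finset.card_fin, Finset.card_fin]
  · rw [eval_mul, eval_X]
    induction k using Fin.lastCases with
    | last => rw [Fin.snoc_last, hθ, div_mul_cancel₀ _ (div_ne_zero_iff.mp hθ0.ne').2]
    | cast i => rw [Fin.snoc_castSucc, hroot]

end Interlacing

end Interlacing

section Windows

open Lagrange (nodal)

/-- Successive pairs of roots `a k < b k`, confined to the windows `[l k, l k + R k]` whose widths
`R k` increase. -/
structure InWindows {ι : Type*} [Preorder ι] (l R a b : ι → ℝ) : Prop where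
  monotone_center : Monotone l
  monotone_width : Monotone R
  width_pos : ∀ k, 0 < R k
  le_left : ∀ k, l k ≤ a k
  lt : ∀ k, a k < b k
  lt_of_lt : ∀ {i k}, i < k → b i < a k
  right_le : ∀ k, b k ≤ l k + R k

namespace InWindows

variable {ι : Type*} [Fintype ι] [LinearOrder ι] {l R a b : ι → ℝ}

theorem one_sub_card_mul_le_eval_div_eval (h : InWindows l R a b) {W : ℝ} (hW : 2 ≤ W) {i : ι}
    (hsep : ∀ k, i < k → l i + W * R i < l k) :
    1 - Fintype.card ι * (2 / W) ≤
      (nodal Finset.univ b).eval (l i + W * R i) / (nodal Finset.univ a).eval (l i + W * R i) := by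
  have hW0 : 0 < W := by linarith
  rw [Lagrange.eval_nodal, Lagrange.eval_nodal, ← Finset.prod_div_distrib, ← Finset.card_univ]
  refine one_sub_card_mul_le_prod_div (by positivity) ((div_le_one hW0).mpr hW) fun k _ => ?_
  rcases le_or_gt k i with hki | hik
  · left
    have hl := h.monotone_center hki
    have hR := h.monotone_width hki
    have hdist : W / 2 * R i < l i + W * R i - a k := by
      nlinarith [h.right_le k, h.lt k, h.width_pos i]
    refine ⟨by nlinarith [h.width_pos i], ?_⟩
    calc b k - a k ≤ R k := by linarith [h.right_le k, h.le_left k]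
      _ ≤ R i := hR
      _ = 2 / W * (W / 2 * R i) := by field_simp
      _ ≤ 2 / W * (l i + W * R i - a k) := by gcongr
  · exact Or.inr ⟨(hsep k hik).trans_le (h.le_left k), (h.lt k).le⟩

theorem exists_mem_Ioo_eval_eq (h : InWindows l R a b) {W κ : ℝ} (hW : 2 ≤ W) {i : ι}
    (hsep : ∀ k, i < k → l i + W * R i < l k) (hκ0 : 0 < κ)
    (hκ : κ < 1 - Fintype.card ι * (2 / W)) :
    ∃ r ∈ Set.Ioo (b i) (l i + W * R i),
      (nodal Finset.univ b).eval r = κ * (nodal Finset.univ a).eval r := by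
  have hby : b i < l i + W * R i := by nlinarith [h.right_le i, h.width_pos i]
  have hden : ∀ t ∈ Set.Icc (b i) (l i + W * R i), (nodal Finset.univ a).eval t ≠ 0 := by
    rintro t ⟨hbt, hty⟩
    refine Lagrange.eval_nodal_not_at_node fun k _ => ?_
    rcases lt_trichotomy k i with hki | rfl | hik
    · exact (((h.lt k).trans (h.lt_of_lt hki)).trans ((h.lt i).trans_le hbt)).ne'
    · exact ((h.lt k).trans_le hbt).ne'
    · exact (hty.trans_lt ((hsep k hik).trans_le (h.le_left k))).ne
  exact exists_mem_Ioo_eq_mul_of_lt_div hby (nodal _ b).continuousOn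
    (nodal _ a).continuousOn hden
    (Lagrange.eval_nodal_at_node (Finset.mem_univ i)) hκ0
    (hκ.trans_le (h.one_sub_card_mul_le_eval_div_eval hW hsep))

theorem exists_sub_C_mul_nodal_eq (h : InWindows l R a b) {W κ : ℝ} (hW : 2 ≤ W)
    (hsep : ∀ i k, i < k → l i + W * R i < l k) (hκ0 : 0 < κ)
    (hκ : κ < 1 - Fintype.card ι * (2 / W)) :
    ∃ b' : ι → ℝ, (∀ i, b' i ∈ Set.Ioo (b i) (l i + W * R i)) ∧
      nodal Finset.univ b - C κ * nodal Finset.univ a = C (1 - κ) * nodal Finset.univ b' := by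
  choose b' hb' hroot using fun i => h.exists_mem_Ioo_eval_eq hW (hsep i) hκ0 hκ
  have hmono : StrictMono b' := fun i k hik => by
    linarith [(hb' i).2, hsep i k hik, h.le_left k, h.lt k, (hb' k).1]
  exact ⟨b', hb', sub_C_mul_eq_C_mul_nodal hmono.injective.injOn Lagrange.nodal_monic
    Lagrange.natDegree_nodal Lagrange.nodal_monic Lagrange.natDegree_nodal fun i _ => hroot i⟩

theorem eval_div_eval_mem_Ioc {e : ℕ} {l R a b : Fin (e + 1) → ℝ} (h : InWindows l R a b) {L : ℝ}
    (ha : 0 ≤ a (Fin.last e)) (hbL : ∀ k, b k < L) :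
    (nodal Finset.univ b).eval L / (nodal Finset.univ a).eval L ∈
      Set.Ioc 0 (1 - (b (Fin.last e) - a (Fin.last e)) / L) := by
  have hnum : ∀ k, 0 < L - b k := fun k => sub_pos.mpr (hbL k)
  have hden : ∀ k, 0 < L - a k := fun k => (hnum k).trans (sub_lt_sub_left (h.lt k) L)
  rw [Lagrange.eval_nodal, Lagrange.eval_nodal, ← Finset.prod_div_distrib]
  refine ⟨Finset.prod_pos fun k _ => div_pos (hnum k) (hden k), ?_⟩
  rw [Fin.prod_univ_castSucc]
  have hlast := h.lt (Fin.last e)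
  calc _ ≤ (L - b (Fin.last e)) / (L - a (Fin.last e)) :=
        mul_le_of_le_one_left (div_pos (hnum _) (hden _)).le
          (Finset.prod_le_one (fun _ _ => (div_pos (hnum _) (hden _)).le) fun _ _ =>
            (div_le_one (hden _)).mpr (sub_le_sub_left (h.lt _).le L))
    _ = 1 - (b (Fin.last e) - a (Fin.last e)) / (L - a (Fin.last e)) := by
        rw [one_sub_div (hden _).ne']; ring
    _ ≤ 1 - (b (Fin.last e) - a (Fin.last e)) / L := by
        gcongr
        · exact hden _
        · linarith

/-- The multiplier `κ` is chosen so that `L` becomes a root in place of the largest one. -/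
theorem exists_sub_C_mul_nodal_eq_X_sub_C_mul {e : ℕ} {l R a b : Fin (e + 1) → ℝ}
    (h : InWindows l R a b) {W L : ℝ} (hW : 2 ≤ W)
    (hsep : ∀ i k, i < k → l i + W * R i < l k) (ha : 0 ≤ a (Fin.last e)) (hbL : ∀ k, b k < L)
    (hgap : (e + 1) * (2 / W) < (b (Fin.last e) - a (Fin.last e)) / L) :
    ∃ (κ : ℝ) (b' : Fin e → ℝ), 0 < κ ∧ κ < 1 ∧
      (∀ i, b' i ∈ Set.Ioo (b i.castSucc) (l i.castSucc + W * R i.castSucc)) ∧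
      nodal Finset.univ b - C κ * nodal Finset.univ a =
        C (1 - κ) * ((X - C L) * nodal Finset.univ b') := by
  set κ := (nodal Finset.univ b).eval L / (nodal Finset.univ a).eval L with hκdef
  obtain ⟨hκ0, hκ⟩ : 0 < κ ∧ κ ≤ 1 - (b (Fin.last e) - a (Fin.last e)) / L :=
    h.eval_div_eval_mem_Ioc ha hbL
  have hκW : κ < 1 - Fintype.card (Fin (e + 1)) * (2 / W) := by
    rw [Fintype.card_fin]
    push_cast
    linarith
  have hκ1 : κ < 1 := hκW.trans_le (sub_le_self _ (by positivity))
  choose b' hb' hroot using fun i : Fin e =>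
    h.exists_mem_Ioo_eval_eq hW (hsep i.castSucc) hκ0 hκW
  have hb'lt : ∀ i k, i.castSucc < k → b' i < b k := fun i k hik => by
    linarith [(hb' i).2, hsep _ k hik, h.le_left k, h.lt k]
  have hmono : StrictMono b' := fun i k hik =>
    (hb'lt i k.castSucc (Fin.castSucc_lt_castSucc_iff.mpr hik)).trans (hb' k).1
  have hinj : Function.Injective (Fin.snoc b' L : Fin (e + 1) → ℝ) :=
    Fin.snoc_injective_iff.mpr ⟨hmono.injective, fun ⟨i, hi⟩ =>
      ((hb'lt i _ (Fin.castSucc_lt_last i)).trans (hbL _)).ne hi⟩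
  refine ⟨κ, b', hκ0, hκ1, hb', ?_⟩
  rw [← nodal_snoc]
  refine sub_C_mul_eq_C_mul_nodal hinj.injOn Lagrange.nodal_monic Lagrange.natDegree_nodal
    Lagrange.nodal_monic Lagrange.natDegree_nodal fun k _ => ?_
  induction k using Fin.lastCases with
  | last => rw [Fin.snoc_last, hκdef, div_mul_cancel₀ _ (div_ne_zero_iff.mp hκ0.ne').2]
  | cast i => rw [Fin.snoc_castSucc, hroot]

end InWindows

end Windows

section Configurations

open Lagrange (nodal)

/-- The data of a backward construction: nodes `0 < l 0 < ⋯ < l (m - 1) < L` with gaps at least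
`2 * Δ`, and the increasing scales `ρ k` on which roots may move near `l k`. -/
structure IsNodeSystem (l ρ : ℕ → ℝ) (Δ L : ℝ) (m : ℕ) : Prop where
  pos : 0 < l 0
  gap_pos : 0 < Δ
  add_le : ∀ {i k}, i < k → k < m → l i + 2 * Δ ≤ l k
  lt_top : ∀ {k}, k < m → l k < L
  scale_pos : ∀ k, 0 < ρ k
  scale_mono : Monotone ρ
  scale_le : ∀ k, ρ k ≤ L

/-- The roots `a` and `b` of the two monic polynomials of a stage stay to the right of their
nodes; the distance from `a i` to `b i` is at least `γ * ρ i` and that from `l i` to `b i` at most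
`D * ρ i`. -/
structure IsConfig (l ρ : ℕ → ℝ) (γ D : ℝ) {e : ℕ} (a : Fin (e + 1) → ℝ) (b : Fin e → ℝ) :
    Prop where
  le_left : ∀ k : Fin (e + 1), l k ≤ a k
  gap_le : ∀ i : Fin e, a i.castSucc + γ * ρ i ≤ b i
  right_le : ∀ i : Fin e, b i ≤ l i + D * ρ i

/-- One backward step for monic polynomials: an Euclid-like division of `F` by `G` with root `ℓ`
and quotient `P`, followed by one of `G` by `P` with remainder `R`. -/
def NormalizedStep (η ℓ : ℝ) (F G P R : ℝ[X]) : Prop :=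
  ∃ θ κ : ℝ, 0 < θ ∧ θ ≤ 1 - η ∧ 0 < κ ∧ κ < 1 ∧
    F - C θ * X * G = C (1 - θ) * ((X - C ℓ) * P) ∧ G - C κ * P = C (1 - κ) * R

variable {l ρ : ℕ → ℝ} {Δ L : ℝ} {m : ℕ}

theorem IsNodeSystem.le (hl : IsNodeSystem l ρ Δ L m) {i k : ℕ} (hik : i ≤ k) (hk : k < m) :
    l i ≤ l k := by
  rcases hik.eq_or_lt with rfl | hik
  · exact le_rfl
  · linarith [hl.add_le hik hk, hl.gap_pos]

namespace IsConfig

variable {γ D : ℝ} {e : ℕ} {a : Fin (e + 1) → ℝ} {b : Fin e → ℝ}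

theorem right_add_le (h : IsConfig l ρ γ D a b) (hl : IsNodeSystem l ρ Δ L m) (he : e < m)
    (hD : ∀ i < e, D * ρ i ≤ Δ) (i : Fin e) : b i + Δ ≤ a i.succ := by
  have hsucc := h.le_left i.succ
  rw [Fin.val_succ] at hsucc
  linarith [h.right_le i, hD i i.is_lt, hl.add_le (Nat.lt_succ_self i) (by omega)]

theorem interlacing (h : IsConfig l ρ γ D a b) (hl : IsNodeSystem l ρ Δ L m) (he : e < m)
    (hγ : 0 < γ) (hD : ∀ i < e, D * ρ i ≤ Δ) : Interlacing a b where
  lt_right i := by linarith [h.gap_le i, mul_pos hγ (hl.scale_pos i)]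
  right_lt i := by linarith [h.right_add_le hl he hD i, hl.gap_pos]

theorem exists_left_step (h : IsConfig l ρ γ D a b) (hl : IsNodeSystem l ρ Δ L m) (he : e < m)
    (hγ : 0 < γ) (hD0 : 0 < D) (hD : ∀ i < e, D * ρ i ≤ Δ) {ℓ : ℝ} (haℓ : a (Fin.last e) < ℓ)
    (hℓL : ℓ ≤ L) :
    ∃ (θ : ℝ) (a' : Fin e → ℝ), 0 < θ ∧ θ ≤ 1 - l 0 / L ∧
      nodal Finset.univ a - C θ * X * nodal Finset.univ b =
        C (1 - θ) * ((X - C ℓ) * nodal Finset.univ a') ∧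
      (∀ i, a' i + Δ / (2 * L) * γ * ρ i ≤ b i) ∧
      InWindows (fun i : Fin e => l i) (fun i => D * ρ i) a' b := by
  have hint := h.interlacing hl he hγ hD
  have hl0 : l 0 ≤ a 0 := h.le_left 0
  have ha0 : 0 < a 0 := hl.pos.trans_le hl0
  have hℓ0 : 0 < ℓ := (ha0.trans_le (hint.strictMono_left.monotone (Fin.zero_le _))).trans haℓ
  have hc0 : 0 < Δ / (2 * L) := div_pos hl.gap_pos (by linarith)
  obtain ⟨θ, a', hθ0, hθ, ha', hF⟩ := hint.exists_sub_mul_X_mul_eq ha0 hl.gap_pos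
    (h.right_add_le hl he hD) haℓ (haℓ.le.trans hℓL)
  have hgap : ∀ i, a' i + Δ / (2 * L) * γ * ρ i ≤ b i := fun i => by
    have := mul_le_mul_of_nonneg_left (h.gap_le i) hc0.le
    nlinarith [(ha' i).2]
  refine ⟨θ, a', hθ0, hθ.trans (sub_le_sub_left (div_le_div₀ ha0.le hl0 hℓ0 hℓL) 1), hF, hgap, ?_⟩
  exact
    { monotone_center := fun i k hik => hl.le hik (k.is_lt.trans he)
      monotone_width := fun i k hik => mul_le_mul_of_nonneg_left (hl.scale_mono hik) hD0.le
      width_pos := fun k => mul_pos hD0 (hl.scale_pos k)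
      le_left := fun k => (h.le_left k.castSucc).trans (ha' k).1.le
      lt := fun k => by linarith [hgap k, mul_pos (mul_pos hc0 hγ) (hl.scale_pos k)]
      lt_of_lt := fun {i k} hik =>
        (hint.right_lt_of_lt (Fin.castSucc_lt_castSucc_iff.mpr hik)).trans (ha' k).1
      right_le := h.right_le }

theorem exists_keep (h : IsConfig l ρ γ D a b) (hl : IsNodeSystem l ρ Δ L m) (he : e < m)
    (hγ : 0 < γ) (hD0 : 0 < D) {W : ℝ} (hW : 2 ≤ W) (heW : 4 * e ≤ W)
    (hWD : ∀ i < e, W * D * ρ i ≤ Δ) {ℓ : ℝ} (haℓ : a (Fin.last e) < ℓ) (hℓL : ℓ ≤ L) :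
    ∃ a' b' : Fin e → ℝ,
      NormalizedStep (l 0 / L) ℓ (nodal Finset.univ a) (nodal Finset.univ b)
        (nodal Finset.univ a') (nodal Finset.univ b') ∧
      IsConfig l ρ (Δ / (2 * L) * γ) (W * D) (Fin.snoc a' ℓ : Fin (e + 1) → ℝ) b' := by
  have hD : ∀ i < e, D * ρ i ≤ Δ := fun i hi => by
    nlinarith [hWD i hi, mul_pos hD0 (hl.scale_pos i)]
  obtain ⟨θ, a', hθ0, hθ, hF, hgap, hwin⟩ := h.exists_left_step hl he hγ hD0 hD haℓ hℓL
  have hsep : ∀ i k : Fin e, i < k → l i + W * (D * ρ i) < l k := fun i k hik => by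
    linarith [hWD i i.is_lt, hl.add_le hik (k.is_lt.trans he), hl.gap_pos]
  have hκ : (1 / 4 : ℝ) < 1 - Fintype.card (Fin e) * (2 / W) := by
    have : e * (2 / W) ≤ 1 / 2 := by
      rw [← mul_div_assoc, div_le_iff₀ (by linarith)]
      linarith
    rw [Fintype.card_fin]
    linarith
  obtain ⟨b', hb', hG⟩ := hwin.exists_sub_C_mul_nodal_eq hW hsep (by norm_num) hκ
  refine ⟨a', b', ⟨θ, 1 / 4, hθ0, hθ, by norm_num, by norm_num, hF, hG⟩, ?_, fun i => ?_,
    fun i => ?_⟩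
  · intro k
    induction k using Fin.lastCases with
    | last => rw [Fin.snoc_last]; exact (h.le_left _).trans haℓ.le
    | cast i => rw [Fin.snoc_castSucc]; exact hwin.le_left i
  · rw [Fin.snoc_castSucc]
    exact (hgap i).trans (hb' i).1.le
  · rw [mul_assoc]
    exact (hb' i).2.le

/-- In contrast to `exists_keep`, the root of `R` that is placed at `L` uses up the last node. -/
theorem exists_drop {a : Fin (e + 2) → ℝ} {b : Fin (e + 1) → ℝ} (h : IsConfig l ρ γ D a b)
    (hl : IsNodeSystem l ρ Δ L m) (he : e + 1 < m) (hγ : 0 < γ) (hD0 : 0 < D) {W : ℝ}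
    (hW : 2 ≤ W) (heW : (e + 1) * (2 / W) < Δ / (2 * L) * γ * ρ e / L)
    (hD : ∀ i < e + 1, D * ρ i ≤ Δ) (hWD : ∀ i < e, W * D * ρ i ≤ Δ)
    (haL : a (Fin.last (e + 1)) < L) :
    ∃ (a' : Fin (e + 1) → ℝ) (b' : Fin e → ℝ),
      NormalizedStep (l 0 / L) L (nodal Finset.univ a) (nodal Finset.univ b)
        (nodal Finset.univ a') ((X - C L) * nodal Finset.univ b') ∧
      a' (Fin.last e) < l e + Δ ∧ IsConfig l ρ (Δ / (2 * L) * γ) (W * D) a' b' := by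
  obtain ⟨θ, a', hθ0, hθ, hF, hgap, hwin⟩ := h.exists_left_step hl he hγ hD0 hD haL le_rfl
  have hint := h.interlacing hl he hγ hD
  have hL0 : 0 < L := hl.pos.trans (hl.lt_top (by omega))
  have hbL : ∀ k, b k < L := fun k =>
    (hint.right_lt_of_lt k.castSucc_lt_last).trans haL
  have hsep : ∀ i k : Fin (e + 1), i < k → l i + W * (D * ρ i) < l k := fun i k hik => by
    linarith [hWD i (by omega), hl.add_le hik (k.is_lt.trans he), hl.gap_pos]
  have ha' : 0 ≤ a' (Fin.last e) :=
    hl.pos.le.trans ((hl.le (Nat.zero_le _) (by rw [Fin.val_last]; omega)).trans (hwin.le_left _))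
  have hlast := hgap (Fin.last e)
  have hWlast : (e + 1) * (2 / W) < (b (Fin.last e) - a' (Fin.last e)) / L := by
    refine heW.trans_le (div_le_div_of_nonneg_right ?_ hL0.le)
    rw [Fin.val_last] at hlast
    linarith
  obtain ⟨κ, b', hκ0, hκ1, hb', hG⟩ :=
    hwin.exists_sub_C_mul_nodal_eq_X_sub_C_mul hW hsep ha' hbL hWlast
  refine ⟨a', b', ⟨θ, κ, hθ0, hθ, hκ0, hκ1, hF, hG⟩, ?_, hwin.le_left, fun i => ?_, fun i => ?_⟩
  · have hright := h.right_le (Fin.last e)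
    rw [Fin.val_last] at hright
    linarith [hwin.lt (Fin.last e), hD e (Nat.lt_succ_self e)]
  · exact (hgap i.castSucc).trans (hb' i).1.le
  · rw [mul_assoc]
    exact (hb' i).2.le

end IsConfig

end Configurations

section Stages

open Lagrange (nodal)

/-- The data `(F_j, G_j, μ_j, ν_j)` of one stage of the construction. -/
structure Stage where
  F : ℝ[X]
  G : ℝ[X]
  μ : ℝ
  ν : ℝ

/-- The relations between the stages `S = S_{j+1}` and `S' = S_j` for `j ∉ I`, with
`ℓ = λ*_{j+1}`, `b = b_{j+1}` and `w = m_{j+1}`; both degrees drop. -/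
def IsDropStep (ℓ b w : ℝ) (S S' : Stage) : Prop :=
  C S.μ * S.F = -(C w * C S.ν) * X * S.G + C b * C S'.μ * (C ℓ - X) * S'.F ∧
    C S.ν * S.G = C S'.μ * S'.F + C b * C S'.ν * (C ℓ - X) * S'.G

/-- The relations between the stages `S = S_{j+1}` and `S' = S_j` for `j ∈ I`; both degrees are
kept. -/
def IsKeepStep (ℓ b w : ℝ) (S S' : Stage) : Prop :=
  C S.μ * S.F = -(C w * C S.ν) * X * S.G - C b * C S'.μ * S'.F ∧
    C S.ν * (X - C ℓ) * S.G = C S'.μ * S'.F + C b * C S'.ν * (C ℓ - X) * S'.G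

/-- The roots of `F` and `G` form a configuration at level `e = natDegree G`, all roots of `F`
being less than `u`. -/
def Stage.HasConfig (l ρ : ℕ → ℝ) (γ D : ℝ) (e : ℕ) (u : ℝ) (S : Stage) : Prop :=
  ∃ (a : Fin (e + 1) → ℝ) (b : Fin e → ℝ), S.F = nodal Finset.univ a ∧
    S.G = nodal Finset.univ b ∧ a (Fin.last e) < u ∧ IsConfig l ρ γ D a b

theorem Stage.HasConfig.monic {l ρ : ℕ → ℝ} {γ D u : ℝ} {e : ℕ} {S : Stage}
    (h : S.HasConfig l ρ γ D e u) : S.F.Monic ∧ S.G.Monic := by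
  obtain ⟨a, b, hF, hG, -⟩ := h
  rw [hF, hG]
  exact ⟨Lagrange.nodal_monic, Lagrange.nodal_monic⟩

theorem NormalizedStep.exists_scaling {η ℓ μ ν : ℝ} {F G P R : ℝ[X]}
    (h : NormalizedStep η ℓ F G P R) (hη : 0 < η) (hK : 0 < -μ / ν) :
    ∃ μ' ν' b w : ℝ, 0 < b ∧ 0 < w ∧ -μ / ν * η ≤ -μ' / ν' ∧
      C μ * F = -(C w * C ν) * X * G + C b * C μ' * (C ℓ - X) * P ∧
      C ν * G = C μ' * P - C b * C ν' * R := by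
  obtain ⟨θ, κ, hθ0, hθη, hκ0, hκ1, hF, hG⟩ := h
  set K := -μ / ν with hKdef
  have hν : ν ≠ 0 := (div_ne_zero_iff.mp hK.ne').2
  have hμ : μ = -(K * ν) := by rw [hKdef, div_mul_cancel₀ _ hν, neg_neg]
  have hθ1 : 0 < 1 - θ := by linarith
  have hκ1' : 0 < 1 - κ := sub_pos.mpr hκ1
  refine ⟨κ * ν, -((1 - κ) * κ * ν / (K * (1 - θ))), K * (1 - θ) / κ, θ * K, by positivity,
    by positivity, ?_, ?_, ?_⟩
  · have hratio : -(κ * ν) / -((1 - κ) * κ * ν / (K * (1 - θ))) = K * (1 - θ) / (1 - κ) := by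
      field_simp
    rw [hratio, le_div_iff₀ hκ1']
    have hη' : η ≤ 1 - θ := by linarith
    calc K * η * (1 - κ) ≤ K * η * 1 := by gcongr; linarith
      _ ≤ K * (1 - θ) := by rw [mul_one]; gcongr
  · have hb : C (K * (1 - θ) / κ) * C (κ * ν) = C (K * (1 - θ) * ν) := by
      rw [← C_mul]
      congr 1
      field_simp
    rw [hb, hμ]
    simp only [C_mul, C_neg, C_sub, C_1] at hF ⊢
    linear_combination (-C K * C ν) * hF
  · have hb : C (K * (1 - θ) / κ) * C (-((1 - κ) * κ * ν / (K * (1 - θ)))) =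
        -C ((1 - κ) * ν) := by
      rw [← C_mul, ← C_neg]
      congr 1
      field_simp
    rw [hb]
    simp only [C_mul, C_sub, C_1] at hG ⊢
    linear_combination C ν * hG

variable {l ρ : ℕ → ℝ} {γ D Δ L W u : ℝ} {e m : ℕ} {S : Stage}

theorem Stage.HasConfig.exists_isKeepStep {ℓ : ℝ} (h : S.HasConfig l ρ γ D e ℓ)
    (hl : IsNodeSystem l ρ Δ L m) (he : e < m) (hγ : 0 < γ) (hD : 0 < D) (hW : 2 ≤ W)
    (heW : 4 * e ≤ W) (hWD : ∀ i < e, W * D * ρ i ≤ Δ) (hℓL : ℓ ≤ L) (hℓu : ℓ < u)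
    (hK : 0 < -S.μ / S.ν) :
    ∃ (S' : Stage) (b w : ℝ), S'.HasConfig l ρ (Δ / (2 * L) * γ) (W * D) e u ∧ 0 < b ∧ 0 < w ∧
      -S.μ / S.ν * (l 0 / L) ≤ -S'.μ / S'.ν ∧ IsKeepStep ℓ b w S S' := by
  obtain ⟨a, b, hF, hG, haℓ, hconf⟩ := h
  obtain ⟨a', b', hstep, hconf'⟩ := hconf.exists_keep hl he hγ hD hW heW hWD haℓ hℓL
  have hL : 0 < L := hl.pos.trans (hl.lt_top (by omega))
  rw [← hF, ← hG] at hstep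
  obtain ⟨μ', ν', β, w, hβ, hw, hratio, hFeq, hGeq⟩ :=
    hstep.exists_scaling (div_pos hl.pos hL) hK
  refine ⟨⟨nodal Finset.univ (Fin.snoc a' ℓ : Fin (e + 1) → ℝ), nodal Finset.univ b', μ', ν'⟩,
    β, w, ⟨_, _, rfl, rfl, by rwa [Fin.snoc_last], hconf'⟩, hβ, hw, hratio, ?_, ?_⟩
  · simp only [nodal_snoc]
    linear_combination hFeq
  · simp only [nodal_snoc]
    linear_combination (X - C ℓ) * hGeq

theorem Stage.HasConfig.exists_isDropStep (h : S.HasConfig l ρ γ D (e + 1) L)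
    (hl : IsNodeSystem l ρ Δ L m) (he : e + 1 < m) (hγ : 0 < γ) (hD0 : 0 < D) (hW : 2 ≤ W)
    (heW : (e + 1) * (2 / W) < Δ / (2 * L) * γ * ρ e / L)
    (hD : ∀ i < e + 1, D * ρ i ≤ Δ) (hWD : ∀ i < e, W * D * ρ i ≤ Δ) (hu : l e + Δ ≤ u)
    (hK : 0 < -S.μ / S.ν) :
    ∃ (S' : Stage) (b w : ℝ), S'.HasConfig l ρ (Δ / (2 * L) * γ) (W * D) e u ∧ 0 < b ∧ 0 < w ∧
      -S.μ / S.ν * (l 0 / L) ≤ -S'.μ / S'.ν ∧ IsDropStep L b w S S' := by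
  obtain ⟨a, b, hF, hG, haL, hconf⟩ := h
  obtain ⟨a', b', hstep, ha', hconf'⟩ := hconf.exists_drop hl he hγ hD0 hW heW hD hWD haL
  have hL : 0 < L := hl.pos.trans (hl.lt_top (by omega))
  rw [← hF, ← hG] at hstep
  obtain ⟨μ', ν', β, w, hβ, hw, hratio, hFeq, hGeq⟩ :=
    hstep.exists_scaling (div_pos hl.pos hL) hK
  refine ⟨⟨nodal Finset.univ a', nodal Finset.univ b', μ', ν'⟩, β, w,
    ⟨_, _, rfl, rfl, ha'.trans_le hu, hconf'⟩, hβ, hw, hratio, hFeq, ?_⟩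
  linear_combination hGeq

end Stages

section Schedule

/-- The stages `j` with `dropIndex q e < j ≤ dropIndex q (e + 1)` are those where `G_j` has degree
`e`. -/
def dropIndex (q : ℕ → ℕ) (e : ℕ) : ℕ := e + ∑ h ∈ Finset.Icc 1 e, q h

/-- The condition that `j` lies in the `l`-th block of consecutive integers of the index set `I`
of the paper. -/
def InBlock (q : ℕ → ℕ) (l j : ℕ) : Prop := dropIndex q l < j ∧ j < dropIndex q (l + 1)

/-- The root `λ*_j` that is to be used when passing from stage `j` to stage `j - 1`, if `G_j` has
degree `e`. -/
noncomputable def scheduledRoot (L : ℝ) (q : ℕ → ℕ) (s : ℕ → ℕ → ℝ) (e j : ℕ) : ℝ :=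
  if dropIndex q e + 1 < j then s (e + 1) (dropIndex q (e + 1) + 1 - j) else L

/-- The roots `s h 1 < ⋯ < s h (q h)` to be used at stages where `F` has degree `h`, so that only
the nodes `l 0, …, l (h - 1)` are left. -/
structure IsRootSchedule (l : ℕ → ℝ) (L : ℝ) (m : ℕ) (q : ℕ → ℕ) (s : ℕ → ℕ → ℝ) : Prop where
  lt_succ : ∀ {h r}, 1 ≤ h → h < m → 1 ≤ r → r < q h → s h r < s h (r + 1)
  node_le : ∀ {h r}, 1 ≤ h → h < m → 1 ≤ r → r ≤ q h → l h ≤ s h r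
  lt_top : ∀ {h r}, 1 ≤ h → h < m → 1 ≤ r → r ≤ q h → s h r < L

variable {l ρ : ℕ → ℝ} {Δ L : ℝ} {m : ℕ} {q : ℕ → ℕ} {s : ℕ → ℕ → ℝ} {e j : ℕ}

theorem dropIndex_zero : dropIndex q 0 = 0 := by simp [dropIndex]

theorem dropIndex_succ : dropIndex q (e + 1) = dropIndex q e + 1 + q (e + 1) := by
  rw [dropIndex, dropIndex, Finset.sum_Icc_succ_top (by omega)]
  omega

theorem dropIndex_strictMono : StrictMono (dropIndex q) :=
  strictMono_nat_of_lt_succ fun e => by rw [dropIndex_succ]; omega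

theorem inBlock_iff :
    InBlock q e j ↔ e + 1 + ∑ h ∈ Finset.Icc 1 e, q h ≤ j ∧
      j ≤ e + ∑ h ∈ Finset.Icc 1 (e + 1), q h := by
  rw [InBlock, dropIndex, dropIndex]
  omega

theorem InBlock.unique {e' : ℕ} (h : InBlock q e j) (h' : InBlock q e' j) : e = e' :=
  le_antisymm (Nat.lt_succ_iff.mp (dropIndex_strictMono.lt_iff_lt.mp (h.1.trans h'.2)))
    (Nat.lt_succ_iff.mp (dropIndex_strictMono.lt_iff_lt.mp (h'.1.trans h.2)))

theorem not_inBlock_dropIndex (e' : ℕ) : ¬ InBlock q e (dropIndex q e') := fun h => by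
  have h1 := dropIndex_strictMono.lt_iff_lt.mp h.1
  have h2 := dropIndex_strictMono.lt_iff_lt.mp h.2
  omega

theorem InBlock.pos (h : InBlock q e j) : 0 < q (e + 1) := by
  obtain ⟨h1, h2⟩ := h
  rw [dropIndex_succ] at h2
  omega

theorem scheduledRoot_dropIndex_add_one : scheduledRoot L q s e (dropIndex q e + 1) = L :=
  if_neg (lt_irrefl _)

theorem InBlock.scheduledRoot_succ (h : InBlock q e j) :
    scheduledRoot L q s e (j + 1) = s (e + 1) (dropIndex q (e + 1) - j) := by
  rw [scheduledRoot, if_pos (Nat.succ_lt_succ h.1), Nat.add_sub_add_right]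

namespace IsRootSchedule

theorem scheduledRoot_succ_mem (hs : IsRootSchedule l L m q s) (he : e + 1 < m)
    (h : InBlock q e j) : scheduledRoot L q s e (j + 1) ∈ Set.Ico (l (e + 1)) L := by
  have h1 := h.1
  have h2 := h.2
  rw [dropIndex_succ] at h2
  rw [h.scheduledRoot_succ, dropIndex_succ]
  exact ⟨hs.node_le (by omega) he (by omega) (by omega),
    hs.lt_top (by omega) he (by omega) (by omega)⟩

theorem scheduledRoot_succ_lt (hs : IsRootSchedule l L m q s) (he : e + 1 < m)
    (h : InBlock q e j) : scheduledRoot L q s e (j + 1) < scheduledRoot L q s e j := by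
  rcases Nat.lt_or_ge (dropIndex q e + 1) j with hj | hj
  · have h2 := h.2
    rw [dropIndex_succ] at h2
    have hr : dropIndex q (e + 1) + 1 - j = dropIndex q (e + 1) - j + 1 := by
      rw [dropIndex_succ]; omega
    rw [h.scheduledRoot_succ, scheduledRoot, if_pos hj, hr, dropIndex_succ]
    exact hs.lt_succ (by omega) he (by omega) (by omega)
  · rw [show scheduledRoot L q s e j = L from if_neg hj.not_gt]
    exact (hs.scheduledRoot_succ_mem he h).2

theorem node_add_le_scheduledRoot (hs : IsRootSchedule l L m q s) (hl : IsNodeSystem l ρ Δ L m)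
    (he : e + 1 < m) : l e + Δ ≤ scheduledRoot L q s e (dropIndex q (e + 1)) := by
  have hgap := hl.add_le (Nat.lt_succ_self e) he
  have hΔ := hl.gap_pos
  unfold scheduledRoot
  split_ifs with h
  · rw [Nat.add_sub_cancel_left]
    rw [dropIndex_succ] at h
    linarith [hs.node_le (h := e + 1) (r := 1) (by omega) he le_rfl (by omega)]
  · linarith [hl.lt_top he]

end IsRootSchedule

end Schedule

section BackwardChain

theorem exists_chain_downto {α : Type*} {P : ℕ → α → Prop} {R : ℕ → α → α → Prop} {n k : ℕ}
    {x : α} (hx : P n x)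
    (step : ∀ j, k ≤ j → j < n → ∀ x, P (j + 1) x → ∃ y, P j y ∧ R j x y) :
    ∃ f : ℕ → α, f n = x ∧ ∀ j, k ≤ j → j < n → R j (f (j + 1)) (f j) := by
  induction n generalizing x with
  | zero => exact ⟨fun _ => x, rfl, fun j _ hj => absurd hj j.not_lt_zero⟩
  | succ n ih =>
    rcases Nat.lt_or_ge n k with hkn | hkn
    · exact ⟨fun _ => x, rfl, fun j hj hj' => by omega⟩
    obtain ⟨y, hy, hR⟩ := step n hkn n.lt_succ_self x hx
    obtain ⟨f, hfn, hf⟩ := ih hy fun j hj hj' => step j hj (hj'.trans n.lt_succ_self)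
    refine ⟨Function.update f (n + 1) x, Function.update_self .., fun j hj hj' => ?_⟩
    rw [Function.update_of_ne (by omega : j ≠ n + 1)]
    rcases (Nat.lt_succ_iff.mp hj').eq_or_lt with rfl | hlt
    · rwa [Function.update_self, hfn]
    · rw [Function.update_of_ne (by omega : j + 1 ≠ n + 1)]
      exact hf j hj hlt

/-- A factor by which the windows containing the roots of `G_j` have grown when `G_j` has degree
`e`: each step multiplies it by `4 * n`, and losing the node `l k` multiplies it further by
`L / (c ^ n * ρ k)`. -/
noncomputable def windowScale (n m : ℕ) (c L : ℝ) (ρ : ℕ → ℝ) (j e : ℕ) : ℝ :=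
  (4 * n) ^ (n - j) * ∏ k ∈ Finset.Ico e (m - 1), L / c ^ n / ρ k

/-- The invariant of the backward recursion at stage `j`. -/
def IsStageAt (l ρ : ℕ → ℝ) (Δ L : ℝ) (n m : ℕ) (q : ℕ → ℕ) (s : ℕ → ℕ → ℝ) (j : ℕ)
    (S : Stage) : Prop :=
  ∃ e < m, dropIndex q e < j ∧ j ≤ dropIndex q (e + 1) ∧
    S.HasConfig l ρ ((Δ / (2 * L)) ^ (n - j)) (windowScale n m (Δ / (2 * L)) L ρ j e) e
      (scheduledRoot L q s e j)

/-- The conclusion about the stages `S = S_{j+1}` and `S' = S_j`, where `ℓ = λ*_{j+1}`,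
`b = b_{j+1}`, `w = m_{j+1}` and `B` is the lower bound for `-μ_j / ν_j`. -/
structure IsBackwardStep (q : ℕ → ℕ) (s : ℕ → ℕ → ℝ) (B : ℝ) (j : ℕ) (S S' : Stage)
    (ℓ b w : ℝ) : Prop where
  monic_left : S'.F.Monic
  monic_right : S'.G.Monic
  root_pos : 0 < ℓ
  coeff_pos : 0 < b
  mass_pos : 0 < w
  lt_ratio : B < -S'.μ / S'.ν
  isDropStep : (¬ ∃ e, InBlock q e j) → IsDropStep ℓ b w S S'
  isKeepStep : ∀ e, InBlock q e j →
    IsKeepStep ℓ b w S S' ∧ ℓ = s (e + 1) (dropIndex q (e + 1) - j)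

variable {l ρ : ℕ → ℝ} {Δ L c : ℝ} {n m : ℕ} {q : ℕ → ℕ} {s : ℕ → ℕ → ℝ} {e j : ℕ} {S : Stage}

theorem windowScale_pos (hn : 0 < n) (hc : 0 < c) (hL : 0 < L) (hρ : ∀ k, 0 < ρ k) :
    0 < windowScale n m c L ρ j e :=
  mul_pos (by positivity) (Finset.prod_pos fun k _ => div_pos (by positivity) (hρ k))

theorem windowScale_eq_mul (hj : j < n) :
    windowScale n m c L ρ j e = 4 * n * windowScale n m c L ρ (j + 1) e := by
  rw [windowScale, windowScale, show n - j = n - (j + 1) + 1 by omega, pow_succ']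
  ring

theorem windowScale_eq_mul_mul (hj : j < n) (he : e + 1 < m) :
    windowScale n m c L ρ j e =
      4 * n * (L / c ^ n / ρ e) * windowScale n m c L ρ (j + 1) (e + 1) := by
  rw [windowScale_eq_mul hj, windowScale, windowScale, Finset.prod_eq_prod_Ico_succ_bot (by omega)]
  ring

theorem card_mul_two_div_lt (hc0 : 0 < c) (hc1 : c ≤ 1) (hL : 0 < L) {r : ℝ} (hr : 0 < r)
    (he : e < n) (k : ℕ) :
    (e + 1) * (2 / (4 * n * (L / c ^ n / r))) < c ^ (n - k) * r / L := by
  have hn : (0 : ℝ) < n := by exact_mod_cast (Nat.zero_le e).trans_lt he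
  have hen : ((e : ℝ) + 1) / (2 * n) < 1 := by
    rw [div_lt_one (by positivity)]
    have : (e : ℝ) + 1 ≤ n := by exact_mod_cast he
    linarith
  calc (e + 1) * (2 / (4 * n * (L / c ^ n / r))) = (e + 1) / (2 * n) * (c ^ n * r / L) := by
        field_simp
        ring
    _ < c ^ n * r / L := mul_lt_of_lt_one_left (by positivity) hen
    _ ≤ c ^ (n - k) * r / L := by
        gcongr ?_ * r / L
        exact pow_le_pow_of_le_one hc0.le hc1 (Nat.sub_le n k)

theorem IsStageAt.monic (h : IsStageAt l ρ Δ L n m q s j S) : S.F.Monic ∧ S.G.Monic := by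
  obtain ⟨e, -, -, -, hconf⟩ := h
  exact hconf.monic

theorem exists_keep_stage (hl : IsNodeSystem l ρ Δ L m) (hs : IsRootSchedule l L m q s)
    (hscale : ∀ j, ∀ e < m, ∀ i < e, windowScale n m (Δ / (2 * L)) L ρ j e * ρ i ≤ Δ)
    (hmn : m ≤ n) (hjn : j < n) (he : e + 1 < m) (hblock : InBlock q e j)
    (hS : S.HasConfig l ρ ((Δ / (2 * L)) ^ (n - (j + 1)))
      (windowScale n m (Δ / (2 * L)) L ρ (j + 1) e) e (scheduledRoot L q s e (j + 1)))
    (hK : 0 < -S.μ / S.ν) :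
    ∃ (S' : Stage) (b w : ℝ), IsStageAt l ρ Δ L n m q s j S' ∧ 0 < b ∧ 0 < w ∧
      -S.μ / S.ν * (l 0 / L) ≤ -S'.μ / S'.ν ∧
      IsKeepStep (s (e + 1) (dropIndex q (e + 1) - j)) b w S S' := by
  have hL : 0 < L := hl.pos.trans (hl.lt_top (by omega))
  have hc : 0 < Δ / (2 * L) := div_pos hl.gap_pos (by positivity)
  have hn : (2 : ℝ) ≤ n := by exact_mod_cast (show 2 ≤ n by omega)
  have hen : (e : ℝ) ≤ n := by exact_mod_cast (show e ≤ n by omega)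
  have hwin : ∀ i < e, 4 * n * windowScale n m (Δ / (2 * L)) L ρ (j + 1) e * ρ i ≤ Δ :=
    fun i hi => by
      rw [← windowScale_eq_mul hjn]
      exact hscale j e (by omega) i hi
  obtain ⟨S', b, w, hconf, hb, hw, hratio, hstep⟩ := hS.exists_isKeepStep hl (by omega)
    (pow_pos hc _) (windowScale_pos (by omega) hc hL hl.scale_pos) (by linarith) (by linarith)
    hwin (hs.scheduledRoot_succ_mem he hblock).2.le (hs.scheduledRoot_succ_lt he hblock) hK
  rw [← windowScale_eq_mul hjn, ← pow_succ', show n - (j + 1) + 1 = n - j by omega] at hconf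
  rw [hblock.scheduledRoot_succ] at hstep
  exact ⟨S', b, w, ⟨e, by omega, hblock.1, hblock.2.le, hconf⟩, hb, hw, hratio, hstep⟩

theorem exists_drop_stage (hl : IsNodeSystem l ρ Δ L m) (hs : IsRootSchedule l L m q s)
    (hscale : ∀ j, ∀ e < m, ∀ i < e, windowScale n m (Δ / (2 * L)) L ρ j e * ρ i ≤ Δ)
    (hmn : m ≤ n) (hjn : dropIndex q (e + 1) < n) (he : e + 1 < m)
    (hS : S.HasConfig l ρ ((Δ / (2 * L)) ^ (n - (dropIndex q (e + 1) + 1)))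
      (windowScale n m (Δ / (2 * L)) L ρ (dropIndex q (e + 1) + 1) (e + 1)) (e + 1)
      (scheduledRoot L q s (e + 1) (dropIndex q (e + 1) + 1)))
    (hK : 0 < -S.μ / S.ν) :
    ∃ (S' : Stage) (b w : ℝ), IsStageAt l ρ Δ L n m q s (dropIndex q (e + 1)) S' ∧ 0 < b ∧
      0 < w ∧ -S.μ / S.ν * (l 0 / L) ≤ -S'.μ / S'.ν ∧ IsDropStep L b w S S' := by
  have hL : 0 < L := hl.pos.trans (hl.lt_top (by omega))
  set c := Δ / (2 * L) with hcdef
  set j := dropIndex q (e + 1)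
  have hc : 0 < c := div_pos hl.gap_pos (by positivity)
  have hc1 : c ≤ 1 := by
    rw [hcdef, div_le_one (by positivity)]
    linarith [hl.add_le Nat.zero_lt_one (show 1 < m by omega), hl.pos,
      hl.lt_top (show 1 < m by omega)]
  have hn : (2 : ℝ) ≤ n := by exact_mod_cast (show 2 ≤ n by omega)
  have hgrow : 1 ≤ L / c ^ n / ρ e := by
    rw [one_le_div (hl.scale_pos e)]
    exact (hl.scale_le e).trans (le_div_self hL.le (pow_pos hc n) (pow_le_one₀ hc.le hc1))
  have hwin : ∀ i < e,
      4 * n * (L / c ^ n / ρ e) * windowScale n m c L ρ (j + 1) (e + 1) * ρ i ≤ Δ := fun i hi => by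
    rw [← windowScale_eq_mul_mul hjn he]
    exact hscale j e (by omega) i hi
  have hpow : c * c ^ (n - (j + 1)) = c ^ (n - j) := by
    rw [← pow_succ', show n - (j + 1) + 1 = n - j by omega]
  rw [scheduledRoot_dropIndex_add_one] at hS
  obtain ⟨S', b, w, hconf, hb, hw, hratio, hstep⟩ := hS.exists_isDropStep hl he
    (pow_pos hc _) (windowScale_pos (by omega) hc hL hl.scale_pos) (by nlinarith)
    (hpow ▸ card_mul_two_div_lt hc hc1 hL (hl.scale_pos e) (by omega) j)
    (hscale (j + 1) (e + 1) he) hwin (hs.node_add_le_scheduledRoot hl he) hK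
  rw [← windowScale_eq_mul_mul hjn he, hpow] at hconf
  exact ⟨S', b, w, ⟨e, by omega, dropIndex_strictMono (Nat.lt_succ_self e), le_rfl, hconf⟩, hb, hw,
    hratio, hstep⟩

theorem exists_isBackwardStep (hl : IsNodeSystem l ρ Δ L m) (hs : IsRootSchedule l L m q s)
    (hscale : ∀ j, ∀ e < m, ∀ i < e, windowScale n m (Δ / (2 * L)) L ρ j e * ρ i ≤ Δ)
    (hn : dropIndex q (m - 1) + 1 = n) {A : ℝ} (hA : 0 ≤ A) (hj : 1 ≤ j) (hjn : j < n)
    (hS : IsStageAt l ρ Δ L n m q s (j + 1) S) (hK : A * (L / l 0) ^ (j + 1) < -S.μ / S.ν) :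
    ∃ S', (IsStageAt l ρ Δ L n m q s j S' ∧ A * (L / l 0) ^ j < -S'.μ / S'.ν) ∧
      ∃ ℓ b w, IsBackwardStep q s (A * (L / l 0) ^ j) j S S' ℓ b w := by
  obtain ⟨e, he, hej, hje, hconf⟩ := hS
  have hl0 := hl.pos
  have hL : 0 < L := hl0.trans (hl.lt_top (by omega))
  have hK0 : 0 < -S.μ / S.ν := lt_of_le_of_lt (by positivity) hK
  have hthreshold : A * (L / l 0) ^ j < -S.μ / S.ν * (l 0 / L) := by
    rw [← div_lt_iff₀ (by positivity)]
    calc A * (L / l 0) ^ j / (l 0 / L) = A * (L / l 0) ^ (j + 1) := by rw [pow_succ]; field_simp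
      _ < -S.μ / S.ν := hK
  have hmn : m ≤ n := by have := dropIndex_strictMono (q := q) |>.le_apply (x := m - 1); omega
  rcases (Nat.lt_succ_iff.mp hej).eq_or_lt with rfl | hej
  · obtain ⟨e, rfl⟩ : ∃ e', e = e' + 1 := Nat.exists_eq_succ_of_ne_zero fun h => by
      rw [h, dropIndex_zero] at hj; omega
    obtain ⟨S', b, w, hS', hb, hw, hratio, hstep⟩ :=
      exists_drop_stage hl hs hscale hmn hjn he hconf hK0
    have hlt := hthreshold.trans_le hratio
    exact ⟨S', ⟨hS', hlt⟩, L, b, w, hS'.monic.1, hS'.monic.2, hL, hb, hw, hlt, fun _ => hstep,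
      fun e' hblock => absurd hblock (not_inBlock_dropIndex _)⟩
  · have hblock : InBlock q e j := ⟨hej, hje⟩
    have hem : e < m - 1 :=
      dropIndex_strictMono.lt_iff_lt.mp (show _ < dropIndex q (m - 1) by omega)
    obtain ⟨S', b, w, hS', hb, hw, hratio, hstep⟩ :=
      exists_keep_stage hl hs hscale hmn hjn (by omega) hblock hconf hK0
    have hlt := hthreshold.trans_le hratio
    have hroot : 0 < s (e + 1) (dropIndex q (e + 1) - j) := by
      rw [← hblock.scheduledRoot_succ (L := L) (s := s)]
      exact hl0.trans_le ((hl.le (Nat.zero_le _) (by omega)).trans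
        (hs.scheduledRoot_succ_mem (by omega) hblock).1)
    refine ⟨S', ⟨hS', hlt⟩, _, b, w, hS'.monic.1, hS'.monic.2, hroot, hb, hw, hlt,
      fun h => absurd ⟨e, hblock⟩ h, fun e' hblock' => ?_⟩
    rw [← hblock.unique hblock']
    exact ⟨hstep, rfl⟩

theorem isStageAt_start (hl : IsNodeSystem l ρ Δ L m) (hm : 0 < m) (μ ν : ℝ) :
    IsStageAt l ρ Δ L (dropIndex q (m - 1) + 1) m q s (dropIndex q (m - 1) + 1)
      ⟨∏ k ∈ Finset.range m, (X - C (l k)),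
        ∏ k ∈ Finset.range (m - 1), (X - C (l k + ρ k)), μ, ν⟩ := by
  obtain ⟨e, rfl⟩ : ∃ e, m = e + 1 := Nat.exists_eq_succ_of_ne_zero hm.ne'
  refine ⟨e, Nat.lt_succ_self e, Nat.lt_succ_self _, ?_, fun k => l k, fun k => l k + ρ k,
    Finset.prod_range _, Finset.prod_range _, ?_, fun k => le_rfl, fun i => ?_, fun i => ?_⟩
  · exact dropIndex_strictMono (Nat.lt_succ_self e)
  · rw [Nat.add_sub_cancel, scheduledRoot_dropIndex_add_one]
    exact hl.lt_top (Nat.lt_succ_self e)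
  · simp
  · simp [windowScale]

/-- In the paper's notation, `l k` is `λ_{k+1}`, `ρ k` is `ρ_{k+1}`, and `A` is
`C·Λ·M/(Λ - λ_1)`. -/
theorem stmt_18_general (hl : IsNodeSystem l ρ Δ L m) (hm : 0 < m)
    (hs : IsRootSchedule l L m q s)
    (hscale : ∀ j, ∀ e < m, ∀ i < e, windowScale n m (Δ / (2 * L)) L ρ j e * ρ i ≤ Δ)
    (hn : dropIndex q (m - 1) + 1 = n) {A : ℝ} (hA : 0 ≤ A) {μ ν : ℝ}
    (hK : A * (L / l 0) ^ n < -μ / ν) :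
    ∃ S : ℕ → Stage,
      S n = ⟨∏ k ∈ Finset.range m, (X - C (l k)),
        ∏ k ∈ Finset.range (m - 1), (X - C (l k + ρ k)), μ, ν⟩ ∧
      ∀ j, 1 ≤ j → j < n →
        ∃ ℓ b w, IsBackwardStep q s (A * (L / l 0) ^ j) j (S (j + 1)) (S j) ℓ b w :=
  exists_chain_downto
    (P := fun j S => IsStageAt l ρ Δ L n m q s j S ∧ A * (L / l 0) ^ j < -S.μ / S.ν)
    ⟨hn ▸ isStageAt_start hl hm μ ν, hK⟩ fun _ hj hjn _ hS =>
      exists_isBackwardStep hl hs hscale hn hA hj hjn hS.1 hS.2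

end BackwardChain

section Constants

variable {n m : ℕ} {lam : ℕ → ℝ}

theorem Del_pos (hm : 2 ≤ m) (hmono : ∀ i, 1 ≤ i → i < m → lam i < lam (i + 1)) :
    0 < Del m lam := by
  have hfin := (Set.finite_Icc 1 (m - 1)).image fun i => lam (i + 1) - lam i
  obtain ⟨i, hi, hmin⟩ := Set.Nonempty.csInf_mem
    ⟨_, Set.mem_image_of_mem _ (Set.left_mem_Icc.mpr (show 1 ≤ m - 1 by omega))⟩ hfin
  rw [Del, ← hmin]
  have hgap := sub_pos.mpr (hmono i hi.1 (by have := hi.2; omega))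
  positivity

theorem Del_le_half : Del m lam ≤ 1 / 2 :=
  mul_le_of_le_one_right (by norm_num) (min_le_left _ _)

theorem add_two_mul_Del_le_succ {i : ℕ} (h1 : 1 ≤ i) (hi : i < m) :
    lam i + 2 * Del m lam ≤ lam (i + 1) := by
  have hfin := (Set.finite_Icc 1 (m - 1)).image fun i => lam (i + 1) - lam i
  have hinf := csInf_le hfin.bddBelow (Set.mem_image_of_mem _ ⟨h1, Nat.le_sub_one_of_lt hi⟩)
  have hmin := min_le_right 1 (sInf ((fun i => lam (i + 1) - lam i) '' Set.Icc 1 (m - 1)))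
  rw [Del]
  linarith

theorem add_two_mul_Del_le (hΔ : 0 < Del m lam) {i k : ℕ} (h1 : 1 ≤ i) (hik : i < k) :
    k ≤ m → lam i + 2 * Del m lam ≤ lam k := by
  induction k, hik using Nat.le_induction with
  | base => exact add_two_mul_Del_le_succ h1
  | succ k hik ih =>
    intro hk
    have hsucc : lam k + 2 * Del m lam ≤ lam (k + 1) := add_two_mul_Del_le_succ (by omega) hk
    linarith [ih (by omega)]

theorem eps_pos (hn : 0 < n) (hΔ : 0 < Del m lam) (hΛ : 1 ≤ Lamb m lam) : 0 < eps n m lam := by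
  have : 0 < Lamb m lam := by linarith
  exact div_pos (by positivity) (by positivity)

theorem eps_le_Del (hn : 0 < n) (hΔ : 0 < Del m lam) (hΛ : 1 ≤ Lamb m lam) :
    eps n m lam ≤ Del m lam := by
  have hn' : (1 : ℝ) ≤ n := by exact_mod_cast hn
  have hden : 1 ≤ (n : ℝ) * 2 ^ (3 * (n + 1) ^ 3) * Lamb m lam ^ ((n + 1) ^ 2) :=
    one_le_mul_of_one_le_of_one_le
      (one_le_mul_of_one_le_of_one_le hn' (one_le_pow₀ one_le_two)) (one_le_pow₀ hΛ)
  calc eps n m lam ≤ Del m lam ^ (n ^ 2 + n + 1) := div_le_self (by positivity) hden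
    _ ≤ Del m lam := pow_le_of_le_one hΔ.le (Del_le_half.trans (by norm_num)) (by omega)

theorem eps_mul_le_one (hn : 0 < n) (hΔ : 0 < Del m lam) (hΛ : 1 ≤ Lamb m lam) :
    eps n m lam * (4 * n * (Lamb m lam / (Del m lam / (2 * Lamb m lam)) ^ n)) ≤ 1 := by
  have : (0 : ℝ) < n := by exact_mod_cast hn
  have : 0 < Lamb m lam := by linarith
  have htwo : (4 : ℝ) * 2 ^ n ≤ 2 ^ (3 * (n + 1) ^ 3) :=
    calc (4 : ℝ) * 2 ^ n = 2 ^ (n + 2) := by ring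
      _ ≤ 2 ^ (3 * (n + 1) ^ 3) := pow_le_pow_right₀ one_le_two (by ring_nf; omega)
  have hfactor : 4 * n * (Lamb m lam / (Del m lam / (2 * Lamb m lam)) ^ n) =
      n * (4 * 2 ^ n) * Lamb m lam ^ (n + 1) / Del m lam ^ n := by
    rw [div_pow, mul_pow, pow_succ]
    field_simp
  rw [eps, hfactor, div_mul_div_comm, div_le_one (by positivity), mul_comm (Del m lam ^ _)]
  gcongr n * ?_ * ?_ * ?_
  · exact pow_le_pow_right₀ hΛ (by nlinarith)
  · exact pow_le_pow_of_le_one hΔ.le (Del_le_half.trans (by norm_num)) (by nlinarith)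

theorem rho_monotone (h0 : 0 < eps n m lam) (h1 : eps n m lam ≤ 1) : Monotone (rho n m lam) :=
  fun _ _ hik => pow_le_pow_of_le_one h0.le h1
    (Nat.pow_le_pow_right n.succ_pos (Nat.sub_le_sub_left hik m))

theorem rho_le_sq_rho_succ (hn : 0 < n) (h0 : 0 < eps n m lam) (h1 : eps n m lam ≤ 1) {e : ℕ}
    (he : e < m) : rho n m lam e ≤ rho n m lam (e + 1) ^ 2 := by
  rw [rho, rho, ← pow_mul, show m - e = m - (e + 1) + 1 by omega, pow_succ]
  exact pow_le_pow_of_le_one h0.le h1 (Nat.mul_le_mul_left _ (by omega))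

theorem rho_le_pow_mul_prod (hn : 0 < n) (h0 : 0 < eps n m lam) (h1 : eps n m lam ≤ 1) {e : ℕ}
    (he : e < m) :
    rho n m lam e ≤ eps n m lam ^ (n + 1) * ∏ k ∈ Finset.Ico e (m - 1), rho n m lam (k + 1) := by
  induction Nat.le_sub_one_of_lt he using Nat.decreasingInduction with
  | self => simp [rho, show m - (m - 1) = 1 by omega]
  | of_succ e he' ih =>
    rw [Finset.prod_eq_prod_Ico_succ_bot he', mul_left_comm]
    calc rho n m lam e ≤ rho n m lam (e + 1) ^ 2 := rho_le_sq_rho_succ hn h0 h1 he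
      _ = rho n m lam (e + 1) * rho n m lam (e + 1) := sq _
      _ ≤ _ := mul_le_mul_of_nonneg_left (ih (by omega)) (pow_pos h0 _).le

theorem windowScale_mul_rho_le_Del (hmn : m ≤ n) (hΔ : 0 < Del m lam) (hΛ : 1 ≤ Lamb m lam)
    (j e : ℕ) (he : e < m) (i : ℕ) (hi : i < e) :
    windowScale n m (Del m lam / (2 * Lamb m lam)) (Lamb m lam) (fun k => rho n m lam (k + 1)) j e *
      rho n m lam (i + 1) ≤ Del m lam := by
  have hn : 0 < n := by omega
  have hn' : (1 : ℝ) ≤ n := by exact_mod_cast hn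
  have : 0 < Lamb m lam := by linarith
  have hε := eps_pos hn hΔ hΛ
  have hεΔ := eps_le_Del hn hΔ hΛ
  have hε1 : eps n m lam ≤ 1 := by linarith [Del_le_half (m := m) (lam := lam)]
  set c := Del m lam / (2 * Lamb m lam) with hcdef
  have hc : 0 < c := by positivity
  have hc1 : c ≤ 1 := by
    rw [hcdef, div_le_one (by positivity)]
    linarith [Del_le_half (m := m) (lam := lam)]
  have hgrow : 1 ≤ Lamb m lam / c ^ n := by
    rw [one_le_div (by positivity)]
    exact (pow_le_one₀ hc.le hc1).trans hΛ
  set P := ∏ k ∈ Finset.Ico e (m - 1), rho n m lam (k + 1)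
  have hP0 : 0 < P := Finset.prod_pos fun k _ => pow_pos hε _
  rw [windowScale, Finset.prod_div_distrib, Finset.prod_const, Nat.card_Ico]
  calc (4 * n : ℝ) ^ (n - j) * ((Lamb m lam / c ^ n) ^ (m - 1 - e) / P) * rho n m lam (i + 1)
      ≤ (4 * n) ^ n * ((Lamb m lam / c ^ n) ^ n / P) * (eps n m lam ^ (n + 1) * P) := by
        gcongr
        · exact (pow_pos hε _).le
        · linarith
        · omega
        · omega
        · exact (rho_monotone hε hε1 hi).trans (rho_le_pow_mul_prod hn hε hε1 he)
    _ = (eps n m lam * (4 * n * (Lamb m lam / c ^ n))) ^ n * eps n m lam := by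
        rw [mul_pow (eps n m lam), mul_pow (4 * n : ℝ), pow_succ]
        field_simp
    _ ≤ 1 * eps n m lam :=
        mul_le_mul_of_nonneg_right (pow_le_one₀ (by positivity) (eps_mul_le_one hn hΔ hΛ)) hε.le
    _ ≤ Del m lam := by rwa [one_mul]

theorem lam_le (hΔ : 0 < Del m lam) {i k : ℕ} (h1 : 1 ≤ i) (hik : i ≤ k) (hk : k ≤ m) :
    lam i ≤ lam k := by
  rcases hik.eq_or_lt with rfl | hik
  · exact le_rfl
  · linarith [add_two_mul_Del_le hΔ h1 hik hk]

theorem lam_lt_Lamb (hΔ : 0 < Del m lam) {i : ℕ} (h1 : 1 ≤ i) (hi : i ≤ m) :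
    lam i < Lamb m lam :=
  (lam_le hΔ h1 hi le_rfl).trans_lt (lt_one_add _)

theorem one_le_Lamb (hΔ : 0 < Del m lam) (hpos : 0 < lam 1) (hm : 0 < m) : 1 ≤ Lamb m lam :=
  le_add_of_nonneg_right (hpos.le.trans (lam_le hΔ le_rfl hm le_rfl))

theorem CC_nonneg (hΛ : 0 ≤ Lamb m lam) : 0 ≤ CC n m lam :=
  div_nonneg (by positivity)
    (mul_nonneg ((even_two_mul _).pow_nonneg _) ((even_two_mul _).pow_nonneg _))

theorem isNodeSystem_lam_rho (hm : 0 < m) (hn : 0 < n) (hΔ : 0 < Del m lam) (hpos : 0 < lam 1) :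
    IsNodeSystem (fun k => lam (k + 1)) (fun k => rho n m lam (k + 1)) (Del m lam)
      (Lamb m lam) m := by
  have hΛ := one_le_Lamb hΔ hpos hm
  have hε := eps_pos hn hΔ hΛ
  have hε1 : eps n m lam ≤ 1 := by
    linarith [eps_le_Del hn hΔ hΛ, Del_le_half (m := m) (lam := lam)]
  exact ⟨hpos, hΔ, fun hik hk => add_two_mul_Del_le hΔ (by omega) (by omega) hk,
    fun hk => lam_lt_Lamb hΔ (Nat.succ_pos _) hk, fun k => pow_pos hε _,
    fun _ _ h => rho_monotone hε hε1 (by omega), fun k => (pow_le_one₀ hε.le hε1).trans hΛ⟩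

theorem threshold_nonneg {Mass : ℕ → ℝ} (hΔ : 0 < Del m lam) (hpos : 0 < lam 1) (hm : 0 < m)
    (hMass : ∀ l, 1 ≤ l → l ≤ m → 0 ≤ Mass l) :
    0 ≤ CC n m lam * (Lamb m lam * (∑ l ∈ Finset.Icc 1 m, Mass l) / (Lamb m lam - lam 1)) := by
  have hΛ := one_le_Lamb hΔ hpos hm
  have hlt := lam_lt_Lamb hΔ le_rfl hm
  have hsum : 0 ≤ ∑ l ∈ Finset.Icc 1 m, Mass l :=
    Finset.sum_nonneg fun l hl => hMass l (Finset.mem_Icc.mp hl).1 (Finset.mem_Icc.mp hl).2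
  exact mul_nonneg (CC_nonneg (by linarith)) (div_nonneg (by positivity) (by linarith))

end Constants

section Multiplicities

variable {m : ℕ} {t q : ℕ → ℕ}

theorem card_add_sum_card_lt_eq_sum (ht : ∀ i, 1 ≤ i → i ≤ m → 0 < t i)
    (htm : ∀ i, 1 ≤ i → i ≤ m → t i ≤ m)
    (hq : ∀ h, q h = ((Finset.Icc 1 m).filter fun i => h + 1 ≤ t i).card) :
    m + ∑ h ∈ Finset.Icc 1 (m - 1), q h = ∑ i ∈ Finset.Icc 1 m, t i := by
  have hcount : ∀ i ∈ Finset.Icc 1 m,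
      t i = 1 + ((Finset.Icc 1 (m - 1)).filter fun h => h + 1 ≤ t i).card := fun i hi => by
    rw [Finset.mem_Icc] at hi
    have hti := ht i hi.1 hi.2
    have htim := htm i hi.1 hi.2
    have hfilter : ((Finset.Icc 1 (m - 1)).filter fun h => h + 1 ≤ t i) =
        Finset.Icc 1 (t i - 1) := by
      ext h
      simp only [Finset.mem_filter, Finset.mem_Icc]
      omega
    rw [hfilter, Nat.card_Icc]
    omega
  rw [Finset.sum_congr rfl hcount, Finset.sum_add_distrib]
  simp only [hq, Finset.card_filter]
  rw [Finset.sum_comm]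
  simp

theorem dropIndex_sub_one_add_one (hm : 0 < m) (ht : ∀ i, 1 ≤ i → i ≤ m → 0 < t i)
    (htm : ∀ i, 1 ≤ i → i ≤ m → t i ≤ m)
    (hq : ∀ h, q h = ((Finset.Icc 1 m).filter fun i => h + 1 ≤ t i).card) :
    dropIndex q (m - 1) + 1 = ∑ i ∈ Finset.Icc 1 m, t i := by
  rw [← card_add_sum_card_lt_eq_sum ht htm hq, dropIndex]
  omega

theorem lt_of_card_pos {T h : ℕ} (hT : IsGreatest (t '' Set.Icc 1 m) T)
    (hq : ∀ h, q h = ((Finset.Icc 1 m).filter fun i => h + 1 ≤ t i).card) (h0 : 0 < q h) :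
    h < T := by
  obtain ⟨i, hi⟩ := Finset.card_pos.mp (hq h ▸ h0)
  rw [Finset.mem_filter, Finset.mem_Icc] at hi
  exact hi.2.trans (hT.2 (Set.mem_image_of_mem t hi.1))

theorem isRootSchedule_of_enumeration {lam : ℕ → ℝ} {s : ℕ → ℕ → ℝ} {T : ℕ}
    (hΔ : 0 < Del m lam) (hti : ∀ i, 1 ≤ i → i ≤ m → t i ≤ i)
    (hT : IsGreatest (t '' Set.Icc 1 m) T)
    (hq : ∀ h, q h = ((Finset.Icc 1 m).filter fun i => h + 1 ≤ t i).card)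
    (hsmono : ∀ h r, 1 ≤ h → h ≤ T - 1 → 1 ≤ r → r < q h → s h r < s h (r + 1))
    (hsmem : ∀ h r, 1 ≤ h → h ≤ T - 1 → 1 ≤ r → r ≤ q h →
      ∃ i, 1 ≤ i ∧ i ≤ m ∧ h + 1 ≤ t i ∧ s h r = lam i) :
    IsRootSchedule (fun k => lam (k + 1)) (Lamb m lam) m q s := by
  have hhT : ∀ {h}, 0 < q h → h ≤ T - 1 := fun h0 => Nat.le_sub_one_of_lt (lt_of_card_pos hT hq h0)
  refine ⟨fun h1 _ hr hrq => hsmono _ _ h1 (hhT (by omega)) hr hrq, fun h1 _ hr hrq => ?_,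
    fun h1 _ hr hrq => ?_⟩ <;>
  obtain ⟨i, hi, him, hhi, heq⟩ := hsmem _ _ h1 (hhT (by omega)) hr hrq <;> rw [heq]
  · exact lam_le hΔ (by omega) (hhi.trans (hti i hi him)) him
  · exact lam_lt_Lamb hΔ hi him

theorem prod_Icc_one {M : Type*} [CommMonoid M] (f : ℕ → M) :
    ∏ i ∈ Finset.Icc 1 m, f i = ∏ k ∈ Finset.range m, f (k + 1) := by
  rw [Finset.range_eq_Ico, Finset.prod_Ico_add' f]
  rfl

end Multiplicities

/-- Lemma `lemma21`: the backward construction of the sequences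
`F_j, G_j, λ*_j, b_j, m_j, μ_j, ν_j`.  Here `t` gives the multiplicities
(`t i ≤ i`, `∑ t i = n`), `T = max t i > 1`, `q j = |S_j|` where
`S_j = {λ_i : t_i ≥ j+1}`, and `s j` enumerates `S_j` increasingly as
`s j 1 < ⋯ < s j (q j)`.  The index set `I` of the paper is described by the
existence of `l ≤ T−2` with `l+1+∑_{h≤l} q h ≤ j ≤ l+∑_{h≤l+1} q h`. -/
theorem stmt_18 (n m : ℕ) (hm : 2 ≤ m) (hmn : m ≤ n) (lam : ℕ → ℝ)
    (hpos : 0 < lam 1) (hmono : ∀ i, 1 ≤ i → i < m → lam i < lam (i + 1))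
    (t : ℕ → ℕ) (ht : ∀ i, 1 ≤ i → i ≤ m → 0 < t i)
    (hsum : ∑ i ∈ Finset.Icc 1 m, t i = n)
    (hti : ∀ i, 1 ≤ i → i ≤ m → t i ≤ i)
    (T : ℕ) (hT : IsGreatest (t '' Set.Icc 1 m) T) (hT1 : 1 < T)
    (q : ℕ → ℕ)
    (hq : ∀ j, q j = ((Finset.Icc 1 m).filter (fun i => j + 1 ≤ t i)).card)
    (s : ℕ → ℕ → ℝ)
    (hsmono : ∀ j r, 1 ≤ j → j ≤ T - 1 → 1 ≤ r → r < q j → s j r < s j (r + 1))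
    (hsmem : ∀ j r, 1 ≤ j → j ≤ T - 1 → 1 ≤ r → r ≤ q j →
      ∃ i, 1 ≤ i ∧ i ≤ m ∧ j + 1 ≤ t i ∧ s j r = lam i)
    (hssurj : ∀ j i, 1 ≤ j → j ≤ T - 1 → 1 ≤ i → i ≤ m → j + 1 ≤ t i →
      ∃ r, 1 ≤ r ∧ r ≤ q j ∧ s j r = lam i)
    (Mass : ℕ → ℝ) (hMass : ∀ l, 1 ≤ l → l ≤ m → 0 < Mass l)
    (μn νn : ℝ) (hν : νn ≠ 0)
    (hμν : -μn / νn > CC n m lam * (Lamb m lam / lam 1) ^ n *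
      (Lamb m lam * (∑ l ∈ Finset.Icc 1 m, Mass l) / (Lamb m lam - lam 1))) :
    ∃ (F G : ℕ → Polynomial ℝ) (lamst bb mm μ ν : ℕ → ℝ),
      F n = ∏ i ∈ Finset.Icc 1 m, (Polynomial.X - Polynomial.C (lam i)) ∧
      G n = ∏ i ∈ Finset.Icc 1 (m - 1),
        (Polynomial.X - Polynomial.C (lam i + rho n m lam i)) ∧
      μ n = μn ∧ ν n = νn ∧
      ∀ j, 1 ≤ j → j ≤ n - 1 →
        (F j).Monic ∧ (G j).Monic ∧
        0 < lamst (j + 1) ∧ 0 < bb (j + 1) ∧ 0 < mm (j + 1) ∧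
        -μ j / ν j > CC n m lam * (Lamb m lam / lam 1) ^ j *
          (Lamb m lam * (∑ l ∈ Finset.Icc 1 m, Mass l) / (Lamb m lam - lam 1)) ∧
        ((¬ ∃ l, l ≤ T - 2 ∧ l + 1 + ∑ h ∈ Finset.Icc 1 l, q h ≤ j ∧
            j ≤ l + ∑ h ∈ Finset.Icc 1 (l + 1), q h) →
          (Polynomial.C (μ (j + 1)) * F (j + 1) =
              -(Polynomial.C (mm (j + 1)) * Polynomial.C (ν (j + 1))) * Polynomial.X *
                  G (j + 1) +
                Polynomial.C (bb (j + 1)) * Polynomial.C (μ j) *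
                  (Polynomial.C (lamst (j + 1)) - Polynomial.X) * F j ∧
            Polynomial.C (ν (j + 1)) * G (j + 1) =
              Polynomial.C (μ j) * F j +
                Polynomial.C (bb (j + 1)) * Polynomial.C (ν j) *
                  (Polynomial.C (lamst (j + 1)) - Polynomial.X) * G j)) ∧
        (∀ l, l ≤ T - 2 → l + 1 + ∑ h ∈ Finset.Icc 1 l, q h ≤ j →
            j ≤ l + ∑ h ∈ Finset.Icc 1 (l + 1), q h →
          (Polynomial.C (μ (j + 1)) * F (j + 1) =
              -(Polynomial.C (mm (j + 1)) * Polynomial.C (ν (j + 1))) * Polynomial.X *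
                  G (j + 1) -
                Polynomial.C (bb (j + 1)) * Polynomial.C (μ j) * F j ∧
            Polynomial.C (ν (j + 1)) * (Polynomial.X - Polynomial.C (lamst (j + 1))) *
                G (j + 1) =
              Polynomial.C (μ j) * F j +
                Polynomial.C (bb (j + 1)) * Polynomial.C (ν j) *
                  (Polynomial.C (lamst (j + 1)) - Polynomial.X) * G j ∧
            lamst (j + 1) =
              s (l + 1) (l + 1 + (∑ h ∈ Finset.Icc 1 (l + 1), q h) - j))) := by
  have hΔ := Del_pos hm hmono
  have hl := isNodeSystem_lam_rho (n := n) (by omega) (by omega) hΔ hpos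
  have hA := threshold_nonneg (n := n) hΔ hpos (by omega) fun l h1 hl => (hMass l h1 hl).le
  rw [mul_right_comm] at hμν
  obtain ⟨S, hSn, hS⟩ := stmt_18_general hl (by omega)
    (isRootSchedule_of_enumeration hΔ hti hT hq hsmono hsmem)
    (windowScale_mul_rho_le_Del hmn hΔ (one_le_Lamb hΔ hpos (by omega)))
    (hsum ▸ dropIndex_sub_one_add_one (by omega) ht (fun i h1 hi => (hti i h1 hi).trans hi) hq)
    hA hμν
  choose! ℓ b w hstep using hS
  refine ⟨fun j => (S j).F, fun j => (S j).G, fun j => ℓ (j - 1), fun j => b (j - 1),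
    fun j => w (j - 1), fun j => (S j).μ, fun j => (S j).ν, by simp only [hSn, prod_Icc_one],
    by simp only [hSn, prod_Icc_one], by simp only [hSn], by simp only [hSn], fun j h1 hj => ?_⟩
  have h := hstep j h1 (by omega)
  rw [mul_right_comm]
  refine ⟨h.monic_left, h.monic_right, h.root_pos, h.coeff_pos, h.mass_pos, h.lt_ratio,
    fun hI => h.isDropStep fun ⟨e, he⟩ => hI ⟨e, ?_, inBlock_iff.mp he⟩, fun l _ h1 h2 => ?_⟩
  · have := lt_of_card_pos hT hq he.pos
    omega
  · obtain ⟨⟨hF, hG⟩, hroot⟩ := h.isKeepStep l (inBlock_iff.mpr ⟨h1, h2⟩)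
    exact ⟨hF, hG, hroot⟩
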